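/- arXiv:2312.09772 — 3 statements merged into one kernel-verified Lean document; each statement's English description precedes it below -/
import Mathlib

section
/- First-variation formula in the space coordinate with boundary term: let t, x, η : ℝ → ℝ be twice continuously differentiable, let V : ℝ → ℝ be continuously differentiable, and let c, m ∈ ℝ with m ≠ 0. Then the derivative at ε = 0 of the map ε ↦ ∫_{γ_i}^{γ_f} (1/2)·((c² + 2V(x(γ) + ε·η(γ))/m)·t'(γ)² − (x'(γ) + ε·η'(γ))²) dγ equals ∫_{γ_i}^{γ_f} ((V'(x(γ))/m)·t'(γ)² + x''(γ))·η(γ) dγ − (x'(γ_f)·η(γ_f) − x'(γ_i)·η(γ_i)). -/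
/-!
For a Lagrangian with continuous partial derivatives, the variation of the action may be computed
under the integral sign, because a jointly continuous derivative is bounded on compact sets. By the
product rule, pairing the momentum `p = ∂L/∂v` with `η'` is the same as pairing `-p'` with `η`, up
to the total derivative of `p η`, which integrates to the boundary term. For the world-line
Lagrangian, `p = -ẋ`.
-/

open MeasureTheory Metric Set

section DerivUnderIntegral

variable {𝕜 F : Type*} [RCLike 𝕜] [NormedAddCommGroup F] [NormedSpace ℝ F] [NormedSpace 𝕜 F]
  {μ : Measure ℝ} [IsLocallyFiniteMeasure μ]

theorem hasDerivAt_intervalIntegral_of_continuous_deriv {f f' : 𝕜 → ℝ → F} (a b : ℝ) (x₀ : 𝕜)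
    (hf : ∀ x, Continuous (f x)) (hf' : Continuous fun z : 𝕜 × ℝ ↦ f' z.1 z.2)
    (hderiv : ∀ x s, HasDerivAt (f · s) (f' x s) x) :
    HasDerivAt (fun x ↦ ∫ s in a..b, f x s ∂μ) (∫ s in a..b, f' x₀ s ∂μ) x₀ := by
  obtain ⟨C, hC⟩ := ((isCompact_closedBall x₀ 1).prod
    (isCompact_uIcc (a := a) (b := b))).exists_bound_of_continuousOn hf'.continuousOn
  have hf'₀ : Continuous (f' x₀) := hf'.comp (.prodMk_right x₀)
  exact (intervalIntegral.hasDerivAt_integral_of_dominated_loc_of_deriv_le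
    (bound := fun _ ↦ C) (closedBall_mem_nhds x₀ one_pos)
    (.of_forall fun x ↦ (hf x).aestronglyMeasurable) ((hf x₀).intervalIntegrable a b)
    hf'₀.aestronglyMeasurable
    (.of_forall fun s hs x hx ↦ hC (x, s) ⟨hx, uIoc_subset_uIcc hs⟩)
    intervalIntegrable_const (.of_forall fun s _ x _ ↦ hderiv x s)).2

end DerivUnderIntegral

section FirstVariation

variable {E F : Type*} [NormedAddCommGroup E] [NormedSpace ℝ E]
  [NormedAddCommGroup F] [NormedSpace ℝ F]

theorem hasDerivAt_intervalIntegral_comp_add_smul {μ : Measure ℝ} [IsLocallyFiniteMeasure μ]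
    {L : ℝ → E → F} {L' : ℝ → E → E →L[ℝ] F} {z w : ℝ → E} (a b : ℝ)
    (hL : Continuous fun y : ℝ × E ↦ L y.1 y.2) (hL' : Continuous fun y : ℝ × E ↦ L' y.1 y.2)
    (hderiv : ∀ s y, HasFDerivAt (L s) (L' s y) y) (hz : Continuous z) (hw : Continuous w) :
    HasDerivAt (fun ε : ℝ ↦ ∫ s in a..b, L s (z s + ε • w s) ∂μ)
      (∫ s in a..b, L' s (z s) (w s) ∂μ) 0 := by
  have hline (s ε : ℝ) : HasDerivAt (fun ε : ℝ ↦ z s + ε • w s) (w s) ε := by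
    simpa using ((hasDerivAt_id ε).smul_const (w s)).const_add (z s)
  have hcont : Continuous fun y : ℝ × ℝ ↦ L' y.2 (z y.2 + y.1 • w y.2) (w y.2) :=
    (hL'.comp (by fun_prop : Continuous fun y : ℝ × ℝ ↦ (y.2, z y.2 + y.1 • w y.2))).clm_apply
      (by fun_prop)
  simpa using hasDerivAt_intervalIntegral_of_continuous_deriv (μ := μ)
    (f' := fun ε s ↦ L' s (z s + ε • w s) (w s)) a b (0 : ℝ)
    (fun ε ↦ hL.comp (by fun_prop : Continuous fun s ↦ (s, z s + ε • w s))) hcont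
    (fun ε s ↦ (hderiv s _).comp_hasDerivAt ε (hline s ε))

variable [CompleteSpace F]

theorem intervalIntegral_clm_apply_add_clm_apply_deriv {f p p' : ℝ → E →L[ℝ] F} {η η' : ℝ → E}
    (a b : ℝ) (hf : Continuous f) (hp : ∀ s, HasDerivAt p (p' s) s) (hp' : Continuous p')
    (hη : ∀ s, HasDerivAt η (η' s) s) (hη' : Continuous η') :
    ∫ s in a..b, (f s (η s) + p s (η' s)) =
      (∫ s in a..b, (f s - p' s) (η s)) + (p b (η b) - p a (η a)) := by
  have hp_cont : Continuous p := continuous_iff_continuousAt.2 fun s ↦ (hp s).continuousAt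
  have hη_cont : Continuous η := continuous_iff_continuousAt.2 fun s ↦ (hη s).continuousAt
  have hbulk : Continuous fun s ↦ (f s - p' s) (η s) := by fun_prop
  have htotal : Continuous fun s ↦ p' s (η s) + p s (η' s) := by fun_prop
  calc
    _ = ∫ s in a..b, ((f s - p' s) (η s) + (p' s (η s) + p s (η' s))) := by
      simp only [sub_apply, sub_add_cancel, ← add_assoc]
    _ = (∫ s in a..b, (f s - p' s) (η s)) + ∫ s in a..b, (p' s (η s) + p s (η' s)) :=
      intervalIntegral.integral_add (hbulk.intervalIntegrable a b) (htotal.intervalIntegrable a b)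
    _ = _ := by
      rw [intervalIntegral.integral_eq_sub_of_hasDerivAt (fun s _ ↦ (hp s).clm_apply (hη s))
        (htotal.intervalIntegrable a b)]

theorem hasDerivAt_action_of_hasDerivAt_momentum {L : ℝ → E × E → F}
    {Lq Lv : ℝ → E × E → E →L[ℝ] F} {q v η η' : ℝ → E} {p' : ℝ → E →L[ℝ] F} (a b : ℝ)
    (hL : Continuous fun y : ℝ × E × E ↦ L y.1 y.2)
    (hLq : Continuous fun y : ℝ × E × E ↦ Lq y.1 y.2)
    (hLv : Continuous fun y : ℝ × E × E ↦ Lv y.1 y.2)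
    (hderiv : ∀ s y, HasFDerivAt (L s) ((Lq s y).coprod (Lv s y)) y)
    (hq : Continuous q) (hv : Continuous v)
    (hp : ∀ s, HasDerivAt (fun s ↦ Lv s (q s, v s)) (p' s) s) (hp' : Continuous p')
    (hη : ∀ s, HasDerivAt η (η' s) s) (hη' : Continuous η') :
    HasDerivAt (fun ε : ℝ ↦ ∫ s in a..b, L s (q s + ε • η s, v s + ε • η' s))
      ((∫ s in a..b, (Lq s (q s, v s) - p' s) (η s)) +
        (Lv b (q b, v b) (η b) - Lv a (q a, v a) (η a))) 0 := by
  have hη_cont : Continuous η := continuous_iff_continuousAt.2 fun s ↦ (hη s).continuousAt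
  have hLq_path : Continuous fun s ↦ Lq s (q s, v s) :=
    hLq.comp (by fun_prop : Continuous fun s ↦ (s, q s, v s))
  rw [← intervalIntegral_clm_apply_add_clm_apply_deriv a b hLq_path hp hp' hη hη']
  simpa using hasDerivAt_intervalIntegral_comp_add_smul (μ := volume) a b hL
    (hLq.continuousLinearMapCoprod hLv) hderiv (hq.prodMk hv) (hη_cont.prodMk hη')

end FirstVariation

/-- The integrand of the world-line action of a particle of mass `m` in the potential `V`, as a
function of position and velocity `z = (x, ẋ)`; the rate `τ = ṫ` of the time coordinate enters as a
parameter because only the space coordinate is varied. -/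
noncomputable def worldLineLagrangian (c m : ℝ) (V : ℝ → ℝ) (τ : ℝ) (z : ℝ × ℝ) : ℝ :=
  (1 / 2 : ℝ) * ((c ^ 2 + 2 * V z.1 / m) * τ ^ 2 - z.2 ^ 2)

theorem hasFDerivAt_worldLineLagrangian {c m : ℝ} {V : ℝ → ℝ} {V' : ℝ} {z : ℝ × ℝ} (τ : ℝ)
    (hV : HasDerivAt V V' z.1) :
    HasFDerivAt (worldLineLagrangian c m V τ)
      (((V' / m * τ ^ 2) • ContinuousLinearMap.id ℝ ℝ).coprod
        (-z.2 • ContinuousLinearMap.id ℝ ℝ)) z := by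
  have hpot : HasDerivAt (fun q ↦ (1 / 2 : ℝ) * ((c ^ 2 + 2 * V q / m) * τ ^ 2))
      (V' / m * τ ^ 2) z.1 :=
    (((((hV.const_mul 2).div_const m).const_add (c ^ 2)).mul_const (τ ^ 2)).const_mul
      (1 / 2 : ℝ)).congr_deriv (by ring)
  have hkin : HasDerivAt (fun v : ℝ ↦ (1 / 2 : ℝ) * v ^ 2) z.2 z.2 :=
    ((hasDerivAt_pow 2 z.2).const_mul (1 / 2 : ℝ)).congr_deriv (by simp)
  have hsplit : worldLineLagrangian c m V τ = fun y ↦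
      (1 / 2 : ℝ) * ((c ^ 2 + 2 * V y.1 / m) * τ ^ 2) - (1 / 2 : ℝ) * y.2 ^ 2 :=
    funext fun _ ↦ mul_sub _ _ _
  rw [hsplit]
  refine ((hpot.comp_hasFDerivAt z hasFDerivAt_fst).fun_sub
    (hkin.comp_hasFDerivAt z (hasFDerivAt_snd (𝕜 := ℝ) (p := z)))).congr_fderiv ?_
  ext <;> simp

theorem first_variation_space_coordinate_general
    (γi γf : ℝ) (t x η : ℝ → ℝ)
    (ht : ContDiff ℝ 1 t) (hx : ContDiff ℝ 2 x) (hη : ContDiff ℝ 1 η)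
    (V : ℝ → ℝ) (hV : ContDiff ℝ 1 V) (c m : ℝ) (_hm : m ≠ 0) :
    HasDerivAt (fun ε : ℝ ↦ ∫ γ in γi..γf, (1 / 2 : ℝ) *
        ((c ^ 2 + 2 * V (x γ + ε * η γ) / m) * deriv t γ ^ 2 -
          (deriv x γ + ε * deriv η γ) ^ 2))
      ((∫ γ in γi..γf, (deriv V (x γ) / m * deriv t γ ^ 2 + deriv (deriv x) γ) * η γ) -
        (deriv x γf * η γf - deriv x γi * η γi)) 0 := by
  have : Continuous (deriv t) := ht.continuous_deriv le_rfl
  have hx' : ContDiff ℝ 1 (deriv x) := hx.deriv'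
  have : Continuous (deriv (deriv x)) := hx'.continuous_deriv le_rfl
  have : Continuous (deriv V) := hV.continuous_deriv le_rfl
  have hmomentum (γ : ℝ) : HasDerivAt (fun γ ↦ -deriv x γ • ContinuousLinearMap.id ℝ ℝ)
      (-deriv (deriv x) γ • ContinuousLinearMap.id ℝ ℝ) γ :=
    (hx'.differentiable one_ne_zero γ).hasDerivAt.fun_neg.smul_const (ContinuousLinearMap.id ℝ ℝ)
  have hvar := hasDerivAt_action_of_hasDerivAt_momentum γi γf
    (L := fun γ ↦ worldLineLagrangian c m V (deriv t γ))
    (p' := fun γ ↦ -deriv (deriv x) γ • ContinuousLinearMap.id ℝ ℝ)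
    (by unfold worldLineLagrangian; fun_prop) (by fun_prop) (by fun_prop)
    (fun γ z ↦ hasFDerivAt_worldLineLagrangian (deriv t γ)
      (hV.differentiable one_ne_zero z.1).hasDerivAt)
    hx.continuous hx'.continuous hmomentum (by fun_prop)
    (fun γ ↦ (hη.differentiable one_ne_zero γ).hasDerivAt) (hη.continuous_deriv le_rfl)
  refine hvar.congr_deriv ?_
  simp only [sub_apply, smul_apply, ContinuousLinearMap.id_apply, smul_eq_mul, neg_mul,
    sub_neg_eq_add, add_mul]
  ring

/-- First variation of the world-line action in the space coordinate, in direction `η`: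
the derivative at `ε = 0` of
`ε ↦ ∫ (1/2)((c² + 2V(x + εη)/m)·ṫ² − (ẋ + εη̇)²)` equals the Euler–Lagrange bulk
term `∫ ((V'(x)/m)·ṫ² + ẍ)·η` minus the boundary term `ẋ(γf)η(γf) − ẋ(γi)η(γi)`. -/
theorem first_variation_space_coordinate
    (γi γf : ℝ) (t x η : ℝ → ℝ)
    (ht : ContDiff ℝ 2 t) (hx : ContDiff ℝ 2 x) (hη : ContDiff ℝ 2 η)
    (V : ℝ → ℝ) (hV : ContDiff ℝ 1 V) (c m : ℝ) (hm : m ≠ 0) :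
    deriv (fun ε : ℝ => ∫ γ in γi..γf, (1/2 : ℝ) *
        ((c^2 + 2 * V (x γ + ε * η γ) / m) * (deriv t γ)^2
          - (deriv x γ + ε * deriv η γ)^2)) 0
      = (∫ γ in γi..γf,
          ((deriv V (x γ) / m) * (deriv t γ)^2 + deriv (deriv x) γ) * η γ)
        - (deriv x γf * η γf - deriv x γi * η γi) :=
  (first_variation_space_coordinate_general γi γf t x η (ht.of_le one_le_two) hx
    (hη.of_le one_le_two) V hV c m hm).deriv
end

section
/- Euler–Lagrange (geodesic) equation for the time coordinate from criticality: let t, x : ℝ → ℝ be twice continuously differentiable, let V : ℝ → ℝ be continuously differentiable, let c, m ∈ ℝ with m ≠ 0, and set g(x) = c² + 2V(x)/m. Suppose that for every smooth function η : ℝ → ℝ with compact support contained in the open interval (γ_i, γ_f), the derivative at ε = 0 of ε ↦ ∫_{γ_i}^{γ_f} (1/2)·(g(x(γ))·(t'(γ) + ε·η'(γ))² − x'(γ)²) dγ vanishes. Then (d/dγ)[g(x(γ))·t'(γ)] = 0 for all γ ∈ (γ_i, γ_f). -/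
/-!
The action is a quadratic polynomial in `ε` with linear coefficient `∫ p η'`, where `p = g(x) t'` is
the momentum conjugate to `t`. Criticality therefore says that `p` has vanishing weak derivative,
and du Bois-Reymond's lemma makes `p` constant: after subtracting from a test function `ψ` the
multiple `(∫ ψ) ρ` of a fixed bump function `ρ` of integral one, what remains is the derivative of a
test function, so `∫ ψ (p - ∫ ρ p) = 0` for every `ψ`.
-/

section DuBoisReymond

open MeasureTheory Set Function
open scoped ContDiff

variable {E : Type*} [NormedAddCommGroup E] [NormedSpace ℝ E] {U : Set ℝ}

lemma hasDerivAt_integral_Iic [CompleteSpace E] {φ : ℝ → E} (hφ : Continuous φ)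
    (hφ_int : Integrable φ) (s : ℝ) : HasDerivAt (fun s => ∫ r in Iic s, φ r) (φ s) s := by
  have split_at_zero (s : ℝ) :
      ∫ r in Iic s, φ r = (∫ r in Iic 0, φ r) + ∫ r in (0 : ℝ)..s, φ r := by
    rw [← intervalIntegral.integral_Iic_sub_Iic hφ_int.integrableOn hφ_int.integrableOn,
      add_sub_cancel]
  rw [funext split_at_zero]
  exact (hφ.integral_hasStrictDerivAt 0 s).hasDerivAt.const_add _

lemma support_integral_Iic_subset {C : Set ℝ} (hC : C.OrdConnected) {φ : ℝ → E}
    (hφC : support φ ⊆ C) (hφ_zero : ∫ r, φ r = 0) :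
    support (fun s => ∫ r in Iic s, φ r) ⊆ C := by
  intro s hs
  obtain ⟨l, hls, hl⟩ : ∃ l ≤ s, l ∈ support φ := by
    by_contra! h
    exact hs (setIntegral_eq_zero_of_forall_eq_zero fun r hr => notMem_support.1 (h r hr))
  obtain ⟨u, hsu, hu⟩ : ∃ u, s < u ∧ u ∈ support φ := by
    by_contra! h
    refine hs (Eq.trans ?_ hφ_zero)
    exact setIntegral_eq_integral_of_forall_compl_eq_zero fun r hr =>
      notMem_support.1 (h r (not_le.1 hr))
  exact hC.out (hφC hl) (hφC hu) ⟨hls, hsu.le⟩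

lemma exists_isCompact_ordConnected_between {α : Type*} [ConditionallyCompleteLinearOrder α]
    [TopologicalSpace α] [OrderTopology α] {K V : Set α} (hK : IsCompact K)
    (hV : V.OrdConnected) (hKV : K ⊆ V) :
    ∃ C : Set α, IsCompact C ∧ C.OrdConnected ∧ K ⊆ C ∧ C ⊆ V := by
  rcases K.eq_empty_or_nonempty with rfl | hne
  · exact ⟨∅, isCompact_empty, ordConnected_empty, subset_rfl, hKV⟩
  · exact ⟨Icc (sInf K) (sSup K), isCompact_Icc, ordConnected_Icc,
      fun r hr => ⟨csInf_le hK.bddBelow hr, le_csSup hK.bddAbove hr⟩,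
      hV.out (hKV (hK.sInf_mem hne)) (hKV (hK.sSup_mem hne))⟩

lemma exists_contDiff_deriv_eq_of_integral_eq_zero [CompleteSpace E] (hU : U.OrdConnected)
    {φ : ℝ → E} (hφ : ContDiff ℝ ∞ φ) (hφ_supp : HasCompactSupport φ) (hφU : tsupport φ ⊆ U)
    (hφ_zero : ∫ r, φ r = 0) :
    ∃ η : ℝ → E, ContDiff ℝ ∞ η ∧ HasCompactSupport η ∧ tsupport η ⊆ U ∧ deriv η = φ := by
  let η : ℝ → E := fun s => ∫ r in Iic s, φ r
  have hη (s : ℝ) : HasDerivAt η (φ s) s := hasDerivAt_integral_Iic hφ.continuous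
    (hφ.continuous.integrable_of_hasCompactSupport hφ_supp) s
  have hη_deriv : deriv η = φ := funext fun s => (hη s).deriv
  obtain ⟨C, hC, hC_conn, hφC, hCU⟩ :=
    exists_isCompact_ordConnected_between hφ_supp.isCompact hU hφU
  have hηC : support η ⊆ C :=
    support_integral_Iic_subset hC_conn ((subset_tsupport φ).trans hφC) hφ_zero
  exact ⟨η, contDiff_infty_iff_deriv.2 ⟨fun s => (hη s).differentiableAt, hη_deriv.symm ▸ hφ⟩,
    .of_support_subset_isCompact hC hηC, (closure_minimal hηC hC.isClosed).trans hCU, hη_deriv⟩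

lemma exists_contDiff_deriv_eq_sub_smul_integral [CompleteSpace E] (hU : U.OrdConnected)
    {ψ : ℝ → E} (hψ : ContDiff ℝ ∞ ψ) (hψ_supp : HasCompactSupport ψ) (hψU : tsupport ψ ⊆ U)
    {ρ : ℝ → ℝ} (hρ : ContDiff ℝ ∞ ρ) (hρ_supp : HasCompactSupport ρ) (hρU : tsupport ρ ⊆ U)
    (hρ_one : ∫ r, ρ r = 1) :
    ∃ η : ℝ → E, ContDiff ℝ ∞ η ∧ HasCompactSupport η ∧ tsupport η ⊆ U ∧
      deriv η = fun s => ψ s - ρ s • ∫ r, ψ r := by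
  have hψ_int : Integrable ψ := hψ.continuous.integrable_of_hasCompactSupport hψ_supp
  have hρ_int : Integrable ρ := hρ.continuous.integrable_of_hasCompactSupport hρ_supp
  refine exists_contDiff_deriv_eq_of_integral_eq_zero hU (hψ.sub (hρ.smul contDiff_const))
    (hψ_supp.sub hρ_supp.smul_right) ?_ ?_
  · exact (tsupport_sub ψ _).trans
      (union_subset hψU ((tsupport_smul_subset_left ρ _).trans hρU))
  · rw [integral_sub hψ_int (hρ_int.smul_const _), integral_smul_const, hρ_one, one_smul, sub_self]

lemma exists_contDiff_integral_eq_one {F : Type*} [NormedAddCommGroup F] [NormedSpace ℝ F]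
    [FiniteDimensional ℝ F] [MeasurableSpace F] [BorelSpace F] (μ : Measure F)
    [IsLocallyFiniteMeasure μ] [μ.IsOpenPosMeasure] {V : Set F} (hV : IsOpen V)
    (hne : V.Nonempty) :
    ∃ ρ : F → ℝ, ContDiff ℝ ∞ ρ ∧ HasCompactSupport ρ ∧ tsupport ρ ⊆ V ∧ ∫ y, ρ y ∂μ = 1 := by
  obtain ⟨y, hy⟩ := hne
  obtain ⟨R, hR, hball⟩ := Metric.nhds_basis_closedBall.mem_iff.1 (hV.mem_nhds hy)
  let bump : ContDiffBump y := ⟨R / 2, R, half_pos hR, half_lt_self hR⟩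
  exact ⟨bump.normed μ, bump.contDiff_normed, bump.hasCompactSupport_normed,
    bump.tsupport_normed_eq.trans_subset hball, bump.integral_normed⟩

lemma integrable_smul_of_tsupport_subset {X : Type*} [TopologicalSpace X] [T2Space X]
    [MeasurableSpace X] [OpensMeasurableSpace X] {μ : Measure X} {V : Set X} {f : X → E}
    (hf : LocallyIntegrableOn f V μ) {ψ : X → ℝ} (hψ : Continuous ψ)
    (hψ_supp : HasCompactSupport ψ) (hψV : tsupport ψ ⊆ V) :
    Integrable (fun y => ψ y • f y) μ := by
  have hsupp : support (fun y => ψ y • f y) ⊆ tsupport ψ :=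
    (support_smul_subset_left ψ f).trans (subset_tsupport ψ)
  rw [← integrableOn_iff_integrable_of_support_subset hsupp]
  exact (hf.integrableOn_compact_subset hψV hψ_supp.isCompact).continuousOn_smul
    hψ.continuousOn hψ_supp.isCompact

theorem ae_eq_const_of_integral_deriv_smul_eq_zero [CompleteSpace E] (hU : IsOpen U)
    (hU_conn : U.OrdConnected) {f : ℝ → E} (hf : LocallyIntegrableOn f U)
    (h : ∀ η : ℝ → ℝ, ContDiff ℝ ∞ η → HasCompactSupport η → tsupport η ⊆ U →
      ∫ s, deriv η s • f s = 0) :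
    ∃ k : E, ∀ᵐ s, s ∈ U → f s = k := by
  rcases U.eq_empty_or_nonempty with rfl | hne
  · simp
  obtain ⟨ρ, hρ, hρ_supp, hρU, hρ_one⟩ := exists_contDiff_integral_eq_one volume hU hne
  have hρf : Integrable fun s => ρ s • f s :=
    integrable_smul_of_tsupport_subset hf hρ.continuous hρ_supp hρU
  let k : E := ∫ s, ρ s • f s
  refine ⟨k, ?_⟩
  suffices hzero : ∀ᵐ s, s ∈ U → f s - k = 0 by simpa only [sub_eq_zero] using hzero
  refine hU.ae_eq_zero_of_integral_contDiff_smul_eq_zero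
    (hf.sub ((locallyIntegrable_const k).locallyIntegrableOn U)) fun ψ hψ hψ_supp hψU => ?_
  have hψ_int : Integrable ψ := hψ.continuous.integrable_of_hasCompactSupport hψ_supp
  have hψf : Integrable fun s => ψ s • f s :=
    integrable_smul_of_tsupport_subset hf hψ.continuous hψ_supp hψU
  obtain ⟨η, hη, hη_supp, hηU, hη_deriv⟩ := exists_contDiff_deriv_eq_sub_smul_integral hU_conn
    hψ hψ_supp hψU hρ hρ_supp hρU hρ_one
  calc ∫ s, ψ s • (f s - k)
      = (∫ s, ψ s • f s) - (∫ s, ψ s) • k := by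
        simp only [smul_sub]
        rw [integral_sub hψf (hψ_int.smul_const k), integral_smul_const]
    _ = ∫ s, (ψ s • f s - (∫ r, ψ r) • ρ s • f s) := by
        rw [integral_sub hψf (hρf.fun_smul _), integral_smul]
    _ = ∫ s, deriv η s • f s := by
        simp only [hη_deriv, sub_smul, smul_smul, smul_eq_mul, mul_comm]
    _ = 0 := h η hη hη_supp hηU

theorem eqOn_const_of_integral_deriv_smul_eq_zero [CompleteSpace E] (hU : IsOpen U)
    (hU_conn : U.OrdConnected) {f : ℝ → E} (hf : ContinuousOn f U)
    (h : ∀ η : ℝ → ℝ, ContDiff ℝ ∞ η → HasCompactSupport η → tsupport η ⊆ U →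
      ∫ s, deriv η s • f s = 0) :
    ∃ k : E, EqOn f (fun _ => k) U := by
  obtain ⟨k, hk⟩ := ae_eq_const_of_integral_deriv_smul_eq_zero hU hU_conn
    (hf.locallyIntegrableOn hU.measurableSet) h
  exact ⟨k, Measure.eqOn_open_of_ae_eq ((ae_restrict_iff' hU.measurableSet).2 hk) hU hf
    continuousOn_const⟩

end DuBoisReymond

section FirstVariation

open MeasureTheory

lemma hasDerivAt_intervalIntegral_quadratic {E : Type*} [NormedAddCommGroup E] [NormedSpace ℝ E]
    {μ : Measure ℝ} {a b : ℝ} {A B C : ℝ → E} (hA : IntervalIntegrable A μ a b)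
    (hB : IntervalIntegrable B μ a b) (hC : IntervalIntegrable C μ a b) (ε₀ : ℝ) :
    HasDerivAt (fun ε : ℝ => ∫ s in a..b, (A s + ε • B s + ε ^ 2 • C s) ∂μ)
      ((∫ s in a..b, B s ∂μ) + (2 * ε₀) • ∫ s in a..b, C s ∂μ) ε₀ := by
  have expand (ε : ℝ) : ∫ s in a..b, (A s + ε • B s + ε ^ 2 • C s) ∂μ =
      (∫ s in a..b, A s ∂μ) + ε • (∫ s in a..b, B s ∂μ) + ε ^ 2 • ∫ s in a..b, C s ∂μ := by
    have hεB : IntervalIntegrable (fun s => ε • B s) μ a b := hB.smul ε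
    have hεC : IntervalIntegrable (fun s => ε ^ 2 • C s) μ a b := hC.smul (ε ^ 2)
    rw [intervalIntegral.integral_add (hA.add hεB) hεC, intervalIntegral.integral_add hA hεB,
      intervalIntegral.integral_smul, intervalIntegral.integral_smul]
  rw [funext expand]
  simpa using (((hasDerivAt_id ε₀).smul_const (∫ s in a..b, B s ∂μ)).const_add
    (∫ s in a..b, A s ∂μ)).fun_add ((hasDerivAt_pow 2 ε₀).smul_const (∫ s in a..b, C s ∂μ))

/-- `G`, `u`, `v`, `w` stand for `g ∘ x`, `t'`, `x'`, `η'`. -/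
lemma hasDerivAt_action_time_variation {G u v w : ℝ → ℝ} (hG : Continuous G) (hu : Continuous u)
    (hv : Continuous v) (hw : Continuous w) (a b : ℝ) :
    HasDerivAt (fun ε : ℝ => ∫ s in a..b, (1/2 : ℝ) * (G s * (u s + ε * w s)^2 - (v s)^2))
      (∫ s in a..b, w s * (G s * u s)) 0 := by
  have expand (ε s : ℝ) : (1/2 : ℝ) * (G s * (u s + ε * w s)^2 - (v s)^2) =
      (1/2 : ℝ) * (G s * u s ^ 2 - v s ^ 2) + ε • (w s * (G s * u s)) +
        ε ^ 2 • ((1/2 : ℝ) * (G s * w s ^ 2)) := by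
    simp only [smul_eq_mul]
    ring
  simp only [expand]
  have hquad := hasDerivAt_intervalIntegral_quadratic (μ := volume) (a := a) (b := b)
    (A := fun s => (1/2 : ℝ) * (G s * u s ^ 2 - v s ^ 2)) (B := fun s => w s * (G s * u s))
    (C := fun s => (1/2 : ℝ) * (G s * w s ^ 2))
    (Continuous.intervalIntegrable (by fun_prop) a b)
    (Continuous.intervalIntegrable (by fun_prop) a b)
    (Continuous.intervalIntegrable (by fun_prop) a b) 0
  simpa only [mul_zero, zero_smul, add_zero] using hquad

end FirstVariation

theorem euler_lagrange_time_coordinate_general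
    {γi γf : ℝ} {t x g : ℝ → ℝ} (ht : ContDiff ℝ 1 t) (hx : ContDiff ℝ 1 x) (hg : Continuous g)
    (hcrit : ∀ η : ℝ → ℝ, ContDiff ℝ (⊤ : ℕ∞) η → HasCompactSupport η →
      tsupport η ⊆ Set.Ioo γi γf →
      deriv (fun ε : ℝ => ∫ γ in γi..γf, (1/2 : ℝ) *
        (g (x γ) * (deriv t γ + ε * deriv η γ)^2 - (deriv x γ)^2)) 0 = 0) :
    ∀ γ ∈ Set.Ioo γi γf, HasDerivAt (fun s => g (x s) * deriv t s) 0 γ := by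
  have ht' : Continuous (deriv t) := ht.continuous_deriv le_rfl
  have hgx : Continuous fun s => g (x s) := hg.comp hx.continuous
  obtain ⟨k, hk⟩ : ∃ k, Set.EqOn (fun s => g (x s) * deriv t s) (fun _ => k) (Set.Ioo γi γf) := by
    refine eqOn_const_of_integral_deriv_smul_eq_zero isOpen_Ioo Set.ordConnected_Ioo
      (hgx.mul ht').continuousOn fun η hη hη_supp hηU => ?_
    have hsupp : Function.support (fun s => deriv η s • (g (x s) * deriv t s)) ⊆
        Set.Ioc γi γf :=
      (Function.support_smul_subset_left _ _).trans <|
        support_deriv_subset.trans <| hηU.trans Set.Ioo_subset_Ioc_self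
    rw [← intervalIntegral.integral_eq_integral_of_support_subset hsupp]
    exact (hasDerivAt_action_time_variation hgx ht' (hx.continuous_deriv le_rfl)
      (hη.continuous_deriv (by simp)) γi γf).deriv.symm.trans (hcrit η hη hη_supp hηU)
  intro γ hγ
  exact (hasDerivAt_const γ k).congr_of_eventuallyEq
    (hk.eventuallyEq_of_mem (Ioo_mem_nhds hγ.1 hγ.2))

/-- Euler–Lagrange (temporal geodesic) equation from criticality: if the first
variation of the world-line action in the time coordinate vanishes for every
smooth variation `η` compactly supported in the open interval `(γi, γf)`, then
`(d/dγ)[g(x(γ))·ṫ(γ)] = 0` on `(γi, γf)`, where `g(y) = c² + 2V(y)/m`. -/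
theorem euler_lagrange_time_coordinate
    (γi γf : ℝ) (t x : ℝ → ℝ)
    (ht : ContDiff ℝ 2 t) (hx : ContDiff ℝ 2 x)
    (V : ℝ → ℝ) (hV : ContDiff ℝ 1 V) (c m : ℝ) (hm : m ≠ 0)
    (hcrit : ∀ η : ℝ → ℝ, ContDiff ℝ (⊤ : ℕ∞) η → HasCompactSupport η →
      tsupport η ⊆ Set.Ioo γi γf →
      deriv (fun ε : ℝ => ∫ γ in γi..γf, (1/2 : ℝ) *
        ((c^2 + 2 * V (x γ) / m) * (deriv t γ + ε * deriv η γ)^2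
          - (deriv x γ)^2)) 0 = 0) :
    ∀ γ ∈ Set.Ioo γi γf,
      deriv (fun s => (c^2 + 2 * V (x s) / m) * deriv t s) γ = 0 := by
  have hg : Continuous fun y => c^2 + 2 * V y / m := by
    have := hV.continuous
    fun_prop
  exact fun γ hγ => (euler_lagrange_time_coordinate_general (ht.of_le one_le_two)
    (hx.of_le one_le_two) hg hcrit γ hγ).deriv
end

section
/- Equality of the forward and backward Noether charges: let t₁, x₁, t₂, x₂ : ℝ → ℝ be differentiable with t₁', t₂' differentiable on [γ_i, γ_f], let V : ℝ → ℝ be continuous, let c, m ∈ ℝ with m ≠ 0, and set g(x) = c² + 2V(x)/m. Suppose both branches satisfy the temporal geodesic equation, i.e. (d/dγ)[g(x₁(γ))·t₁'(γ)] = 0 and (d/dγ)[g(x₂(γ))·t₂'(γ)] = 0 for all γ ∈ [γ_i, γ_f], and suppose the connecting conditions x₁(γ_f) = x₂(γ_f) and t₁'(γ_f) = t₂'(γ_f) hold. Then for all γ, γ' ∈ [γ_i, γ_f], g(x₁(γ))·t₁'(γ) = g(x₂(γ'))·t₂'(γ'); i.e. the Noether charge Q_{t,1} on the forward branch and Q_{t,2}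 on the backward branch are constant and equal to each other over the whole world-line. -/
theorem eq_of_forall_hasDerivWithinAt_zero {𝕜 F : Type*} [RCLike 𝕜]
    [NormedAddCommGroup F] [NormedSpace 𝕜 F] {f : 𝕜 → F} {s : Set 𝕜} (hs : Convex ℝ s)
    (hf : ∀ a ∈ s, HasDerivWithinAt f 0 s a) {a b : 𝕜} (ha : a ∈ s) (hb : b ∈ s) :
    f a = f b := by
  have hnorm : ‖f a - f b‖ ≤ 0 * ‖a - b‖ :=
    hs.norm_image_sub_le_of_norm_hasDerivWithin_le hf (fun _ _ => norm_zero.le) hb ha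
  rwa [zero_mul, norm_le_zero_iff, sub_eq_zero] at hnorm

/-- A charge is any function `Q` of the state `z`; for the temporal Noether charge the state is
`z = (x, ṫ)` and `Q (x, ṫ) = g₀₀(x)·ṫ`. -/
theorem forward_backward_noether_charges_equal_general {S F : Type*}
    [NormedAddCommGroup F] [NormedSpace ℝ F] {I : Set ℝ} (hI : Convex ℝ I) {γf : ℝ} (hγf : γf ∈ I)
    (Q : S → F) {z₁ z₂ : ℝ → S}
    (hQ₁ : ∀ γ ∈ I, HasDerivWithinAt (fun s => Q (z₁ s)) 0 I γ)
    (hQ₂ : ∀ γ ∈ I, HasDerivWithinAt (fun s => Q (z₂ s)) 0 I γ)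
    (hconn : z₁ γf = z₂ γf) {γ γ' : ℝ} (hγ : γ ∈ I) (hγ' : γ' ∈ I) :
    Q (z₁ γ) = Q (z₂ γ') :=
  calc
    Q (z₁ γ) = Q (z₁ γf) := eq_of_forall_hasDerivWithinAt_zero hI hQ₁ hγ hγf
    _ = Q (z₂ γf) := by rw [hconn]
    _ = Q (z₂ γ') := eq_of_forall_hasDerivWithinAt_zero hI hQ₂ hγf hγ'

/-- Equality of the forward and backward Noether charges: if both branches
satisfy the temporal geodesic equation `(d/dγ)[g(xₐ(γ))·ṫₐ(γ)] = 0` on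
`[γi, γf]` (with `g(y) = c² + 2V(y)/m`) and the connecting conditions
`x₁(γf) = x₂(γf)`, `ṫ₁(γf) = ṫ₂(γf)` hold, then the Noether charges
`Q_{t,1} = g(x₁)·ṫ₁` and `Q_{t,2} = g(x₂)·ṫ₂` are constant and equal to each
other over the whole world-line. -/
theorem forward_backward_noether_charges_equal
    (γi γf : ℝ) (hγ : γi ≤ γf) (t₁ x₁ t₂ x₂ : ℝ → ℝ)
    (ht₁ : Differentiable ℝ t₁) (hx₁ : Differentiable ℝ x₁)
    (ht₂ : Differentiable ℝ t₂) (hx₂ : Differentiable ℝ x₂)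
    (ht₁' : DifferentiableOn ℝ (deriv t₁) (Set.Icc γi γf))
    (ht₂' : DifferentiableOn ℝ (deriv t₂) (Set.Icc γi γf))
    (V : ℝ → ℝ) (hV : Continuous V) (c m : ℝ) (hm : m ≠ 0)
    (hgeo₁ : ∀ γ ∈ Set.Icc γi γf,
      HasDerivAt (fun s => (c^2 + 2 * V (x₁ s) / m) * deriv t₁ s) 0 γ)
    (hgeo₂ : ∀ γ ∈ Set.Icc γi γf,
      HasDerivAt (fun s => (c^2 + 2 * V (x₂ s) / m) * deriv t₂ s) 0 γ)
    (hconnx : x₁ γf = x₂ γf) (hconnt : deriv t₁ γf = deriv t₂ γf) :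
    ∀ γ ∈ Set.Icc γi γf, ∀ γ' ∈ Set.Icc γi γf,
      (c^2 + 2 * V (x₁ γ) / m) * deriv t₁ γ
        = (c^2 + 2 * V (x₂ γ') / m) * deriv t₂ γ' := by
  intro γ hmem γ' hmem'
  exact forward_backward_noether_charges_equal_general
    (convex_Icc γi γf) (Set.right_mem_Icc.2 hγ)
    (fun z : ℝ × ℝ => (c ^ 2 + 2 * V z.1 / m) * z.2)
    (z₁ := fun s => (x₁ s, deriv t₁ s)) (z₂ := fun s => (x₂ s, deriv t₂ s))
    (fun s hs => (hgeo₁ s hs).hasDerivWithinAt) (fun s hs => (hgeo₂ s hs).hasDerivWithinAt)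
    (Prod.ext hconnx hconnt) hmem hmem'
end
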